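/- For Lebesgue-almost every x ∈ [0,1), the limit lim_{n→∞} (1/n) Σ_{k=0}^{n-1} ln|1 + cos(2π·3^k x)/32| exists and equals ∫₀¹ ln|1 + cos(2πt)/32| dt, which is strictly negative. -/

import Mathlib

/-!
Tripling on the circle `ℝ / ℤ` is ergodic (`AddCircle.ergodic_nsmul`), so almost everywhere
convergence follows from Birkhoff's theorem for an ergodic map, `ergodic_tendsto_average`.
Its core is `Ergodic.bddAbove_maxSum`: if `∫ f < 0`, the Birkhoff sums of `f` are almost everywhere
bounded above. Applied to `f - ∫ f - ε` and `∫ f - f - ε`, this bounds the upper and lower limits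
of the averages. To prove it, let `P n` be the maximum of the Birkhoff sums of length `0` to `n`.
The set where `P n` stays bounded is invariant, hence null or conull. On its complement
`P (n + 1) - P n ∘ T = max (-P n ∘ T) f` converges to `f`, while its integral is
`∫ (P (n + 1) - P n) ≥ 0`; if the complement were conull, dominated convergence would give
`∫ f ≥ 0`.

The limit is negative because `log (1 + u) ≤ u`, strictly at `u = 1 / 32`, and
`∫ cos (2 π t) / 32 = 0` over a period.
-/

open Real Set Filter Topology MeasureTheory

/-- The running maximum `max (0, f, f + f ∘ T, …)` of the Birkhoff sums of length at most `n`,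
encoded by its recursion in `n`. -/
noncomputable def maxSum {α : Type*} (T : α → α) (f : α → ℝ) : ℕ → α → ℝ
  | 0, _ => 0
  | n + 1, x => max 0 (f x + maxSum T f n (T x))

section maxSum

variable {α : Type*} {T : α → α} {f : α → ℝ}

lemma maxSum_nonneg (n : ℕ) (x : α) : 0 ≤ maxSum T f n x := by
  cases n with
  | zero => exact le_rfl
  | succ n => exact le_max_left _ _

lemma maxSum_le_succ (n : ℕ) (x : α) : maxSum T f n x ≤ maxSum T f (n + 1) x := by
  induction n generalizing x with
  | zero => exact maxSum_nonneg 1 x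
  | succ n ih => exact max_le_max le_rfl (by gcongr; exact ih (T x))

lemma birkhoffSum_le_maxSum (n : ℕ) (x : α) : birkhoffSum T f n x ≤ maxSum T f n x := by
  induction n generalizing x with
  | zero => simp [maxSum]
  | succ n ih =>
    rw [birkhoffSum_succ']
    exact le_max_of_le_right (by gcongr; exact ih (T x))

lemma maxSum_succ_sub (n : ℕ) (x : α) :
    maxSum T f (n + 1) x - maxSum T f n (T x) = max (-maxSum T f n (T x)) (f x) := by
  rw [maxSum, ← max_sub_sub_right]
  simp

lemma bddAbove_maxSum_map_iff (x : α) :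
    BddAbove (range fun n => maxSum T f n (T x)) ↔ BddAbove (range fun n => maxSum T f n x) := by
  constructor
  · rintro ⟨C, hC⟩
    refine ⟨max 0 (f x + C), ?_⟩
    rintro _ ⟨n, rfl⟩
    cases n with
    | zero => exact le_max_left _ _
    | succ n =>
      exact max_le_max le_rfl (by gcongr; exact hC ⟨n, rfl⟩)
  · rintro ⟨C, hC⟩
    refine ⟨C - f x, ?_⟩
    rintro _ ⟨n, rfl⟩
    have h1 : maxSum T f (n + 1) x ≤ C := hC ⟨n + 1, rfl⟩
    have h2 : f x + maxSum T f n (T x) ≤ maxSum T f (n + 1) x := le_max_right _ _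
    simp only
    linarith

variable [MeasurableSpace α] {μ : Measure α}

lemma measurable_maxSum (hT : Measurable T) (hf : Measurable f) (n : ℕ) :
    Measurable (maxSum T f n) := by
  induction n with
  | zero => exact measurable_const
  | succ n ih => exact measurable_const.max (hf.add (ih.comp hT))

lemma integrable_maxSum (hT : MeasurePreserving T μ μ) (hf : Integrable f μ) (n : ℕ) :
    Integrable (maxSum T f n) μ := by
  induction n with
  | zero => exact integrable_zero _ _ _
  | succ n ih =>
    exact (integrable_zero _ _ _).sup (hf.add (hT.integrable_comp_of_integrable ih))

/-- A form of the maximal ergodic theorem: if `∫ f < 0`, then the Birkhoff sums of `f` are almost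
everywhere bounded above. -/
lemma Ergodic.bddAbove_maxSum (hT : Ergodic T μ) (hfm : Measurable f) (hf : Integrable f μ)
    (hneg : ∫ x, f x ∂μ < 0) : ∀ᵐ x ∂μ, BddAbove (range fun n => maxSum T f n x) := by
  have hP := measurable_maxSum hT.measurable hfm
  have hPi := integrable_maxSum hT.toMeasurePreserving hf
  have hE : MeasurableSet {x | BddAbove (range fun n => maxSum T f n x)} :=
    measurableSet_bddAbove_range hP
  have hinv : T ⁻¹' {x | BddAbove (range fun n => maxSum T f n x)} =
      {x | BddAbove (range fun n => maxSum T f n x)} :=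
    Set.ext fun x => bddAbove_maxSum_map_iff x
  rcases hT.toPreErgodic.ae_mem_or_ae_notMem hE hinv with h | h
  · exact h
  exfalso
  have hlim : Tendsto (fun n => ∫ x, max (-maxSum T f n (T x)) (f x) ∂μ) atTop
      (𝓝 (∫ x, f x ∂μ)) := by
    refine tendsto_integral_of_dominated_convergence (fun x => |f x|) ?_ hf.abs ?_ ?_
    · intro n
      exact (((hP n).comp hT.measurable).neg.max hfm).aestronglyMeasurable
    · intro n
      refine Eventually.of_forall fun x => ?_
      have := maxSum_nonneg (T := T) (f := f) n (T x)
      rw [Real.norm_eq_abs, abs_le]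
      exact ⟨(neg_abs_le _).trans (le_max_right _ _),
        max_le (by linarith [abs_nonneg (f x)]) (le_abs_self _)⟩
    · filter_upwards [h] with x hx
      have hx' : ¬ BddAbove (range fun n => maxSum T f n (T x)) := fun h' =>
        hx ((bddAbove_maxSum_map_iff x).1 h')
      have htop := tendsto_atTop_atTop_of_monotone'
        (monotone_nat_of_le_succ fun n => maxSum_le_succ (T := T) (f := f) n (T x)) hx'
      refine tendsto_const_nhds.congr' ?_
      filter_upwards [htop.eventually_ge_atTop (-f x)] with n hn
      rw [max_eq_right (by linarith)]
  have hnn : ∀ n, 0 ≤ ∫ x, max (-maxSum T f n (T x)) (f x) ∂μ := by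
    intro n
    have hcomp : ∫ x, maxSum T f n (T x) ∂μ = ∫ x, maxSum T f n x ∂μ := by
      conv_rhs => rw [← hT.toMeasurePreserving.map_eq]
      exact (integral_map hT.measurable.aemeasurable (hP n).aestronglyMeasurable).symm
    simp_rw [← maxSum_succ_sub]
    have hPT : Integrable (fun x => maxSum T f n (T x)) μ :=
      hT.toMeasurePreserving.integrable_comp_of_integrable (hPi n)
    rw [integral_sub (hPi _) hPT, hcomp, sub_nonneg]
    exact integral_mono (hPi _) (hPi _) (maxSum_le_succ n)
  exact absurd (ge_of_tendsto' hlim hnn) (not_le.2 hneg)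

/-- The upper half of Birkhoff's theorem, with an error of `2 * ε`: one `ε` makes the integral of
`f - ∫ f - ε` negative, the other absorbs the resulting bound divided by `n`. -/
lemma ergodic_eventually_average_lt [IsProbabilityMeasure μ] (hT : Ergodic T μ)
    (hfm : Measurable f) (hf : Integrable f μ) {ε : ℝ} (hε : 0 < ε) :
    ∀ᵐ x ∂μ, ∀ᶠ n : ℕ in atTop, (1 / n : ℝ) * birkhoffSum T f n x < ∫ y, f y ∂μ + 2 * ε := by
  set c := ∫ y, f y ∂μ with hc
  have hneg : ∫ x, (f x - (c + ε)) ∂μ < 0 := by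
    rw [integral_sub hf (integrable_const _)]
    simp [← hc, hε]
  filter_upwards [hT.bddAbove_maxSum (hfm.sub_const (c + ε)) (hf.sub (integrable_const _)) hneg]
    with x hx
  obtain ⟨C, hC⟩ := hx
  filter_upwards [tendsto_natCast_atTop_atTop.eventually_gt_atTop (C / ε),
    eventually_gt_atTop 0] with n hn hn0
  have hn0' : (0 : ℝ) < n := by exact_mod_cast hn0
  have h1 := (birkhoffSum_le_maxSum (T := T) (f := fun x => f x - (c + ε)) n x).trans
    (hC ⟨n, rfl⟩)
  have h2 : birkhoffSum T (fun x => f x - (c + ε)) n x = birkhoffSum T f n x - n * (c + ε) := by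
    simp [birkhoffSum, Finset.sum_sub_distrib, mul_add]
  rw [div_lt_iff₀ hε] at hn
  rw [one_div, inv_mul_lt_iff₀ hn0']
  linarith

/-- Birkhoff's pointwise ergodic theorem for an ergodic map of a probability space. -/
theorem ergodic_tendsto_average [IsProbabilityMeasure μ] (hT : Ergodic T μ)
    (hfm : Measurable f) (hf : Integrable f μ) :
    ∀ᵐ x ∂μ, Tendsto (fun n : ℕ => (1 / n : ℝ) * birkhoffSum T f n x) atTop
      (𝓝 (∫ y, f y ∂μ)) := by
  have hup : ∀ᵐ x ∂μ, ∀ m : ℕ, ∀ᶠ n : ℕ in atTop,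
      (1 / n : ℝ) * birkhoffSum T f n x < ∫ y, f y ∂μ + 2 * (1 / ((m : ℝ) + 1)) :=
    ae_all_iff.2 fun m => ergodic_eventually_average_lt hT hfm hf Nat.one_div_pos_of_nat
  have hlow : ∀ᵐ x ∂μ, ∀ m : ℕ, ∀ᶠ n : ℕ in atTop,
      (1 / n : ℝ) * birkhoffSum T (fun y => -f y) n x <
        ∫ y, -f y ∂μ + 2 * (1 / ((m : ℝ) + 1)) :=
    ae_all_iff.2 fun m => ergodic_eventually_average_lt hT hfm.neg hf.neg Nat.one_div_pos_of_nat
  filter_upwards [hup, hlow] with x hx1 hx2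
  rw [Metric.tendsto_nhds]
  intro ε hε
  obtain ⟨m, hm⟩ := exists_nat_one_div_lt (half_pos hε)
  filter_upwards [hx1 m, hx2 m] with n h1 h2
  have h3 : birkhoffSum T (fun y => -f y) n x = -birkhoffSum T f n x := by
    simp [birkhoffSum]
  rw [h3, integral_neg] at h2
  rw [Real.dist_eq, abs_lt]
  constructor <;> linarith

end maxSum

/-- The observable as a function on the circle; the real part of the first Fourier character
is `cos (2 π t)`. -/
noncomputable def circleObs (y : UnitAddCircle) : ℝ :=
  Real.log |1 + (fourier 1 y : ℂ).re / 32|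

lemma fourier_one_re (t : ℝ) :
    (fourier 1 (t : UnitAddCircle) : ℂ).re = Real.cos (2 * π * t) := by
  have h : (fourier 1 (t : UnitAddCircle) : ℂ) =
      Complex.exp (((2 * π * t : ℝ) : ℂ) * Complex.I) := by
    rw [fourier_coe_apply]
    congr 1
    push_cast
    ring
  rw [h, Complex.exp_ofReal_mul_I_re]

lemma circleObs_coe (t : ℝ) :
    circleObs (t : UnitAddCircle) = Real.log |1 + Real.cos (2 * π * t) / 32| := by
  rw [circleObs, fourier_one_re]

lemma one_add_div_pos {c : ℝ} (h : -1 ≤ c) : 0 < 1 + c / 32 := by linarith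

lemma continuous_circleObs : Continuous circleObs := by
  unfold circleObs
  refine Continuous.log (by fun_prop) fun y => ?_
  induction y using QuotientAddGroup.induction_on with
  | H t =>
    have h := fourier_one_re t
    rw [h]
    exact abs_ne_zero.2 (one_add_div_pos (Real.neg_one_le_cos _)).ne'

lemma integral_log_neg :
    (∫ t in (0:ℝ)..1, Real.log |1 + Real.cos (2 * π * t) / 32|) < 0 := by
  have hpos (t : ℝ) : 0 < 1 + Real.cos (2 * π * t) / 32 :=
    one_add_div_pos (Real.neg_one_le_cos _)
  have hcos : ∫ t in (0:ℝ)..1, Real.cos (2 * π * t) / 32 = 0 := by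
    rw [intervalIntegral.integral_div,
      intervalIntegral.integral_comp_mul_left (fun t => Real.cos t) Real.two_pi_pos.ne']
    simp
  refine lt_of_lt_of_eq ?_ hcos
  refine intervalIntegral.integral_lt_integral_of_continuousOn_of_le_of_exists_lt one_pos
    (Continuous.continuousOn ?_) (Continuous.continuousOn ?_) (fun t _ => ?_) ⟨0, by simp, ?_⟩
  · exact Continuous.log (by fun_prop) fun t => abs_ne_zero.2 (hpos t).ne'
  · fun_prop
  · rw [abs_of_pos (hpos t)]
    linarith [Real.log_le_sub_one_of_pos (hpos t)]
  · rw [abs_of_pos (hpos 0)]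
    have := Real.log_lt_sub_one_of_pos (hpos 0) (by norm_num)
    linarith

theorem stmt_10 :
    (∀ᵐ x ∂(volume.restrict (Set.Ico (0:ℝ) 1)),
      Tendsto (fun n : ℕ => (1 / n : ℝ) *
          ∑ k ∈ Finset.range n,
            Real.log |1 + Real.cos (2 * π * (3 ^ k * x)) / 32|)
        atTop
        (𝓝 (∫ t in (0:ℝ)..1, Real.log |1 + Real.cos (2 * π * t) / 32|))) ∧
    (∫ t in (0:ℝ)..1, Real.log |1 + Real.cos (2 * π * t) / 32|) < 0 := by
  refine ⟨?_, integral_log_neg⟩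
  have hT : Ergodic (fun y : UnitAddCircle => 3 • y) := AddCircle.ergodic_nsmul (by norm_num)
  have : IsProbabilityMeasure (volume : Measure UnitAddCircle) :=
    ⟨by simp⟩
  have hae := ergodic_tendsto_average hT continuous_circleObs.measurable
    (continuous_circleObs.integrable_of_hasCompactSupport
      (HasCompactSupport.of_compactSpace _))
  have hae' := (UnitAddCircle.measurePreserving_mk 0).quasiMeasurePreserving.ae hae
  rw [zero_add, ← Measure.restrict_congr_set Ico_ae_eq_Ioc] at hae'
  have hint : ∫ t in (0:ℝ)..1, Real.log |1 + Real.cos (2 * π * t) / 32| =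
      ∫ y : UnitAddCircle, circleObs y := by
    rw [← UnitAddCircle.intervalIntegral_preimage 0, zero_add]
    simp_rw [circleObs_coe]
  filter_upwards [hae'] with x hx
  rw [hint]
  refine hx.congr fun n => ?_
  congr 1
  refine Finset.sum_congr rfl fun k _ => ?_
  have hk : (fun y : UnitAddCircle => 3 • y)^[k] (x : UnitAddCircle) =
      ((3 ^ k * x : ℝ) : UnitAddCircle) := by
    rw [smul_iterate]
    simp [← AddCircle.coe_nsmul]
  rw [← circleObs_coe, ← hk]
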